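/- Let X be a quantum-Wajsberg algebra. Then for all x, y, z ∈ X: (1) (x∧y)∧(y∧z) = (x∧y)∧z; (2) the relation ≤_Q is transitive; (3) x∨y ≤_Q x*→y; (4) (x*→y)*→(x→y*)* = x*→y; (5) (x→y)*→(y→x)* = x→y; (6) (y→x)→(x→y) = x→y; (7) (x→y)∨(y→x) = 1; (8) (z∧x)→(y∧x) = (z∧x)→y. -/

import Mathlib

/-!
Write `x ⊙ y = (x → y*)*`. In an involutive BE algebra, `x ⊙ y` is residuated by `→`, that is
`(x ⊙ y) → z = x → (y → z)` (`prod_imp`), and `x ∧ y = y ⊙ (y → x)` (`inf_eq`). Setting one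
variable of the quantum-Wajsberg axiom to `0` or `1` gives

* `x* ≤_Q x → z` (`neg_leQ_imp`), hence `y ≤_Q x → y` (`leQ_imp`);
* `x → (z ∧ x) = x → z` (`imp_inf_left`) and `x → (x ∧ y) = x → y` (`imp_inf_right`).

The first fact yields the cancellation law `u → (y ⊙ u) = y` for `u = y → x` (`imp_prod_cancel`).
If `a ≤_Q b`, then `a = b ⊙ (b → a)`, so cancellation gives `b = b ∨ a = (b → a) → a`
(`sup_of_leQ`). Consequently `z → b = (b → a) → (z → a)` lies `≤_Q`-above `z → a`, and negation
reverses `≤_Q`; so `→` is `≤_Q`-monotone on the right and antitone on the left.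

The conjuncts then come out as follows.

* By residuation, `a ∧ (y ∧ z) = z ⊙ ((z → a) ∧ (z → y))`, and for `a = x ∧ y ≤_Q y`
  monotonicity collapses this to `z ⊙ (z → a) = a ∧ z`. Transitivity of `≤_Q` follows.
* `x ∨ y ≤_Q x* → y` is antitonicity applied to `x* ≤_Q x → y`.
* `(y → x) → (x → y) = x → ((y → x) → (x ∧ y)) = x → y`, by cancellation. The two identities
  with negated implications are contrapositives of this one, and prelinearity
  `(x → y) ∨ (y → x) = 1` is immediate from it.
* `(z ∧ x) → w = (x → z) → (x → w)`, and `x → (y ∧ x) = x → y`; this is the last identity.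
-/

/-- A bounded involutive BE algebra. -/
class InvBE (X : Type*) where
  imp : X → X → X
  one : X
  zero : X
  be1 : ∀ x : X, imp x x = one
  be2 : ∀ x : X, imp x one = one
  be3 : ∀ x : X, imp one x = x
  be4 : ∀ x y z : X, imp x (imp y z) = imp y (imp x z)
  bound : ∀ x : X, imp zero x = one
  dn : ∀ x : X, imp (imp x zero) zero = x

namespace InvBE

variable {X : Type*} [InvBE X]

/-- Negation: `x* = x → 0`. -/
def neg (x : X) : X := imp x zero

/-- `x ∨ y = (x → y) → y`. -/
def sup (x y : X) : X := imp (imp x y) y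

/-- `x ∧ y = ((x* → y*) → y*)*`. -/
def inf (x y : X) : X := neg (imp (imp (neg x) (neg y)) (neg y))

/-- `x ≤ y` iff `x → y = 1`. -/
def le (x y : X) : Prop := imp x y = one

/-- `x ≤_Q y` iff `x = x ∧ y`. -/
def leQ (x y : X) : Prop := x = inf x y

end InvBE

namespace InvBE

variable {X : Type*} [InvBE X]

/-- The product `x ⊙ y = (x → y*)*`. -/
def prod (x y : X) : X := neg (imp x (neg y))

lemma neg_neg' (x : X) : neg (neg x) = x := dn x

lemma imp_neg_comm (x y : X) : imp x (neg y) = imp y (neg x) := be4 x y zero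

lemma neg_imp_neg (x y : X) : imp (neg x) (neg y) = imp y x := by
  rw [imp_neg_comm, neg_neg']

lemma neg_imp_comm (x y : X) : imp (neg x) y = imp (neg y) x := by
  rw [← neg_imp_neg, neg_neg']

lemma neg_one' : neg (one : X) = zero := be3 zero

lemma prod_comm (x y : X) : prod x y = prod y x := by
  unfold prod; rw [imp_neg_comm]

/-- Residuation. -/
lemma prod_imp (x y z : X) : imp (prod x y) z = imp x (imp y z) := by
  unfold prod
  rw [neg_imp_comm, be4, neg_imp_neg]

lemma prod_assoc (x y z : X) : prod (prod x y) z = prod x (prod y z) := by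
  have h := prod_imp x y (neg z)
  unfold prod at h ⊢
  rw [h, neg_neg']

lemma prod_one (x : X) : prod x one = x := by
  unfold prod
  rw [neg_one']
  exact dn x

lemma inf_eq (x y : X) : inf x y = prod y (imp y x) := by
  rw [prod_comm]
  unfold inf prod
  rw [neg_imp_neg]

lemma inf_one (x : X) : inf x one = x := by
  rw [inf_eq, be3, prod_comm, prod_one]

lemma one_inf (x : X) : inf one x = x := by
  rw [inf_eq, be2, prod_one]

lemma zero_inf (x : X) : inf zero x = zero := by
  rw [inf_eq]
  unfold prod
  change neg (imp x (neg (neg x))) = zero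
  rw [neg_neg', be1, neg_one']

lemma inf_zero (x : X) : inf x zero = zero := by
  rw [inf_eq]
  unfold prod
  rw [bound, neg_one']

lemma inf_le (x y : X) : imp (inf x y) y = one := by
  rw [inf_eq, prod_imp, be4, be1, be2]

lemma inf_of_le {a b : X} (h : imp a b = one) : inf b a = a := by
  rw [inf_eq, h, prod_one]

/-- A nested meet in terms of a meet of implications with common antecedent `z`. -/
lemma inf_inf_eq (a y z : X) : inf a (inf y z) = prod z (inf (imp z a) (imp z y)) := by
  rw [inf_eq a, inf_eq y, prod_comm z (imp z y), prod_imp, prod_comm (imp z y) z, prod_assoc,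
    inf_eq (imp z a)]

/-- The contrapositive `b* ≤_Q a*` of `a ≤_Q b`, in terms of the join. -/
lemma leQ_neg_iff (a b : X) : leQ (neg b) (neg a) ↔ sup b a = b := by
  unfold leQ inf sup
  simp only [neg_neg']
  constructor
  · intro h
    have := congrArg neg h
    simpa only [neg_neg'] using this.symm
  · intro h
    rw [h]

section QW

variable (qw : ∀ x y z : X, imp x (inf (inf x y) (inf z x)) = inf (imp x y) (imp x z))
include qw

lemma neg_leQ_imp (x z : X) : leQ (neg x) (imp x z) := by
  have h := qw x zero z
  rw [inf_zero, zero_inf] at h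
  exact h

lemma leQ_imp (x y : X) : leQ y (imp x y) := by
  have h := neg_leQ_imp qw (neg y) (neg x)
  rwa [neg_imp_neg, neg_neg'] at h

lemma imp_inf_left (x z : X) : imp x (inf z x) = imp x z := by
  have h := qw x one z
  rwa [inf_one, be2, one_inf, inf_of_le (inf_le z x)] at h

lemma imp_inf_right (x y : X) : imp x (inf x y) = imp x y := by
  have h := qw x y one
  rwa [one_inf, be2, inf_one, imp_inf_left qw] at h

lemma imp_prod_cancel (x y : X) : imp (imp y x) (prod y (imp y x)) = y := by
  have h : neg y = inf (neg y) (imp y x) := neg_leQ_imp qw y x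
  have h' := congrArg neg h
  unfold inf at h'
  rw [neg_neg', neg_neg', imp_neg_comm] at h'
  exact h'.symm

lemma sup_of_leQ {a b : X} (h : leQ a b) : sup b a = b := by
  have h' : a = prod b (imp b a) := by rw [← inf_eq]; exact h
  have h2 := imp_prod_cancel qw a b
  rw [← h'] at h2
  exact h2

lemma imp_mono_right {a b : X} (h : leQ a b) (z : X) : leQ (imp z a) (imp z b) := by
  have hb : imp (imp b a) a = b := sup_of_leQ qw h
  have h2 := leQ_imp qw (imp b a) (imp z a)
  rwa [be4, hb] at h2

lemma imp_anti_left {a b : X} (h : leQ a b) (z : X) : leQ (imp b z) (imp a z) := by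
  have h2 := imp_mono_right qw ((leQ_neg_iff a b).2 (sup_of_leQ qw h)) (neg z)
  rwa [neg_imp_neg, neg_imp_neg] at h2

lemma inf_leQ_right (x y : X) : leQ (inf x y) y := by
  have h := (leQ_neg_iff _ _).2 (sup_of_leQ qw (leQ_imp qw (imp (neg x) (neg y)) (neg y)))
  rwa [neg_neg'] at h

lemma inf_inf_of_leQ {a y : X} (h : leQ a y) (z : X) : inf a (inf y z) = inf a z := by
  have h2 : imp z a = inf (imp z a) (imp z y) := imp_mono_right qw h z
  rw [inf_inf_eq, ← h2, inf_eq]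

lemma leQ_trans {x y z : X} (hxy : leQ x y) (hyz : leQ y z) : leQ x z := by
  have h := inf_inf_of_leQ qw hxy z
  unfold leQ at *
  rw [← hyz, ← hxy] at h
  exact h

lemma imp_imp_swap (x y : X) : imp (imp y x) (imp x y) = imp x y := by
  rw [← imp_inf_right qw x y, be4, inf_eq, imp_prod_cancel qw, ← inf_eq, imp_inf_right qw]

end QW

end InvBE

open InvBE in
theorem stmt_7 {X : Type*} [InvBE X]
    (qw : ∀ x y z : X, imp x (inf (inf x y) (inf z x)) = inf (imp x y) (imp x z)) :
    (∀ x y z : X, inf (inf x y) (inf y z) = inf (inf x y) z) ∧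
    (∀ x y z : X, leQ x y → leQ y z → leQ x z) ∧
    (∀ x y : X, leQ (sup x y) (imp (neg x) y)) ∧
    (∀ x y : X, imp (neg (imp (neg x) y)) (neg (imp x (neg y))) = imp (neg x) y) ∧
    (∀ x y : X, imp (neg (imp x y)) (neg (imp y x)) = imp x y) ∧
    (∀ x y : X, imp (imp y x) (imp x y) = imp x y) ∧
    (∀ x y : X, sup (imp x y) (imp y x) = one) ∧
    (∀ x y z : X, imp (inf z x) (inf y x) = imp (inf z x) y) := by
  refine ⟨fun x y z => inf_inf_of_leQ qw (inf_leQ_right qw x y) z, fun x y z => leQ_trans qw,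
    fun x y => imp_anti_left qw (neg_leQ_imp qw x y) y, fun x y => ?_, fun x y => ?_,
    imp_imp_swap qw, fun x y => ?_, fun x y z => ?_⟩
  · rw [neg_imp_neg, imp_neg_comm, imp_imp_swap qw]
  · rw [neg_imp_neg, imp_imp_swap qw]
  · unfold sup
    rw [imp_imp_swap qw, be1]
  · rw [inf_eq z, prod_comm, prod_imp, prod_imp, imp_inf_left qw]
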